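/- Let (R, m, k) be a commutative Noetherian local ring with char k != 2, and let M be a finitely generated R-module such that (1) M has rank 1 and (2) M ⊗_R M has no embedded primes. Then M is cyclic. -/

import Mathlib

/-!
Since `M` has rank one, there is a localization map `f : M → Q` at the nonzerodivisors of `R`, where
`Q` is the total ring of fractions, and hence an element `z : M` such that every `x : M` satisfies
`r • x = a • z` for some `a` and some nonzerodivisor `r`. Two consequences:

* each `x ⊗ y - y ⊗ x` in `M ⊗ M` is killed by a nonzerodivisor of `R`;
* the support of `M ⊗ M` is all of `Spec R`, because `f z * f z` is a nonzerodivisor of `Q`.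

If `x ⊗ y - y ⊗ x` were nonzero, its annihilator would lie in an associated prime `p` of `M ⊗ M`.
As `M ⊗ M` has full support and no embedded primes, `p` is a minimal prime of `R`, so it contains
no nonzerodivisor: a contradiction. Hence `x ⊗ y = y ⊗ x` for all `x`, `y`. Applying
`M ⊗ M → M / 𝔪M`, `x ⊗ y ↦ φ(x) y`, for a functional `φ` on `M / 𝔪M` gives `φ(x) y = φ(y) x`, so
`M / 𝔪M` has dimension at most one and Nakayama's lemma finishes the proof.
-/

open TensorProduct

universe u

/-- `M` has rank one: `M ⊗_R Q` is free of rank 1 over the total ring of fractions `Q` of `R`. -/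
def HasRankOne (R : Type u) [CommRing R] (M : Type u) [AddCommGroup M] [Module R M] : Prop :=
  Nonempty ((FractionRing R ⊗[R] M) ≃ₗ[FractionRing R] FractionRing R)

/-- `N` has no embedded primes: every associated prime of `N` is a minimal element of the
support of `N`. -/
def HasNoEmbeddedPrimes (R : Type u) [CommRing R] (N : Type u) [AddCommGroup N]
    [Module R N] : Prop :=
  ∀ p ∈ associatedPrimes R N, ∀ q ∈ Module.support R N, q.asIdeal ≤ p → q.asIdeal = p

open nonZeroDivisors

/-- The map `M → Q ⊗ M ≅ Q` exhibits `Q` as the localization of a rank one module `M` at the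
nonzerodivisors of `R`. -/
lemma HasRankOne.exists_isLocalizedModule {R : Type u} [CommRing R] {M : Type u} [AddCommGroup M]
    [Module R M] (h : HasRankOne R M) :
    ∃ f : M →ₗ[R] FractionRing R, IsLocalizedModule R⁰ f := by
  obtain ⟨e⟩ := h
  have h₁ : IsLocalizedModule R⁰ (TensorProduct.mk R (FractionRing R) M 1) :=
    (isLocalizedModule_iff_isBaseChange R⁰ (FractionRing R) _).mpr
      (TensorProduct.isBaseChange R M (FractionRing R))
  exact ⟨(e.restrictScalars R).toLinearMap ∘ₗ TensorProduct.mk R (FractionRing R) M 1,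
    IsLocalizedModule.of_linearEquiv R⁰ _ (e.restrictScalars R)⟩

/-- The element `z` is a numerator of `1 ∈ Q` under the localization map `f`. -/
lemma HasRankOne.exists_generator {R : Type u} [CommRing R] {M : Type u} [AddCommGroup M]
    [Module R M] (h : HasRankOne R M) :
    ∃ (f : M →ₗ[R] FractionRing R) (z : M) (s : R⁰), f z = algebraMap R (FractionRing R) s ∧
      ∀ x : M, ∃ r : R⁰, ∃ a : R, r • x = a • z := by
  obtain ⟨f, hf⟩ := h.exists_isLocalizedModule
  obtain ⟨⟨z, s⟩, hz⟩ := IsLocalizedModule.surj R⁰ f 1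
  have hz' : f z = algebraMap R (FractionRing R) s := by
    rw [← hz, Submonoid.smul_def, Algebra.smul_def, mul_one]
  refine ⟨f, z, s, hz', fun x ↦ ?_⟩
  obtain ⟨⟨a, t⟩, ha⟩ := IsLocalization.surj R⁰ (f x)
  have h₁ : f ((s * t : R⁰) • x) = f (a • z) := by
    rw [Submonoid.smul_def, map_smul, map_smul, hz', Algebra.smul_def, Algebra.smul_def, ← ha,
      Submonoid.coe_mul, map_mul]
    ring
  obtain ⟨c, hc⟩ := IsLocalizedModule.exists_of_eq (S := R⁰) h₁
  refine ⟨c * (s * t), c * a, ?_⟩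
  rw [mul_smul, hc, mul_smul, Submonoid.smul_def]

lemma HasRankOne.mem_support_tensorProduct {R : Type u} [CommRing R] {M : Type u}
    [AddCommGroup M] [Module R M] (h : HasRankOne R M) (q : PrimeSpectrum R) :
    q ∈ Module.support R (M ⊗[R] M) := by
  obtain ⟨f, z, s, hz, -⟩ := h.exists_generator
  refine Module.mem_support_iff'.mpr ⟨z ⊗ₜ z, fun r hr h₀ ↦ hr ?_⟩
  have h₁ := congrArg (LinearMap.mul' R (FractionRing R) ∘ₗ TensorProduct.map f f) h₀
  simp only [map_smul, LinearMap.comp_apply, TensorProduct.map_tmul, LinearMap.mul'_apply, hz,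
    map_zero, Algebra.smul_def, ← map_mul] at h₁
  have h₂ : r * ((s * s : R⁰) : R) = 0 :=
    IsFractionRing.injective R (FractionRing R) (by simpa using h₁)
  rw [mul_right_mem_nonZeroDivisors_eq_zero_iff (s * s).2] at h₂
  simp [h₂]

lemma HasRankOne.exists_smul_tmul_comm {R : Type u} [CommRing R] {M : Type u}
    [AddCommGroup M] [Module R M] (h : HasRankOne R M) (x y : M) :
    ∃ r ∈ R⁰, r • (x ⊗ₜ[R] y - y ⊗ₜ[R] x) = 0 := by
  obtain ⟨-, z, -, -, hz⟩ := h.exists_generator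
  obtain ⟨r, a, hx⟩ := hz x
  obtain ⟨t, b, hy⟩ := hz y
  rw [Submonoid.smul_def] at hx hy
  refine ⟨r * t, (r * t).2, ?_⟩
  have h₁ : ((r : R) * t) • x ⊗ₜ[R] y = (a * b) • z ⊗ₜ[R] z := by
    rw [← TensorProduct.smul_tmul_smul, hx, hy, TensorProduct.smul_tmul_smul]
  have h₂ : ((r : R) * t) • y ⊗ₜ[R] x = (a * b) • z ⊗ₜ[R] z := by
    rw [mul_comm, ← TensorProduct.smul_tmul_smul, hx, hy, TensorProduct.smul_tmul_smul, mul_comm]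
  rw [smul_sub, h₁, h₂, sub_self]

lemma tmul_comm_of_hasNoEmbeddedPrimes {R : Type u} [CommRing R] [IsNoetherianRing R]
    {M : Type u} [AddCommGroup M] [Module R M] (hrank : HasRankOne R M)
    (hemb : HasNoEmbeddedPrimes R (M ⊗[R] M)) (x y : M) : x ⊗ₜ[R] y = y ⊗ₜ[R] x := by
  by_contra hne
  obtain ⟨p, hp, hle⟩ :=
    exists_le_isAssociatedPrime_of_isNoetherianRing R _ (sub_ne_zero.mpr hne)
  obtain ⟨r, hr, h₀⟩ := hrank.exists_smul_tmul_comm x y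
  have hrp : r ∈ p := hle (Submodule.mem_colon_singleton.mpr (by simpa using h₀))
  have := hp.isPrime
  obtain ⟨q, hq, hqp⟩ := Ideal.exists_minimalPrimes_le (bot_le : ⊥ ≤ p)
  have hqe : q = p := hemb p hp ⟨q, hq.1.1⟩ (hrank.mem_support_tensorProduct _) hqp
  exact Set.disjoint_left.mp (Ideal.disjoint_nonZeroDivisors_of_mem_minimalPrimes hq)
    (hqe ▸ hrp) hr

open IsLocalRing in
/-- A finite module over a local ring with `x ⊗ y = y ⊗ x` for all `x`, `y` is cyclic. -/
lemma exists_span_singleton_eq_top_of_tmul_comm {R : Type u} [CommRing R] [IsLocalRing R]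
    {M : Type u} [AddCommGroup M] [Module R M] [Module.Finite R M]
    (hcomm : ∀ x y : M, x ⊗ₜ[R] y = y ⊗ₜ[R] x) : ∃ x : M, Submodule.span R {x} = ⊤ := by
  suffices h : ∃ x : M, ∀ y : M, ∃ a : R, y - a • x ∈ maximalIdeal R • (⊤ : Submodule R M) by
    obtain ⟨x, hx⟩ := h
    refine ⟨x, top_le_iff.mp <| Submodule.le_of_le_smul_of_le_jacobson_bot Module.Finite.fg_top
      (maximalIdeal_le_jacobson ⊥) fun y _ ↦ ?_⟩
    obtain ⟨a, ha⟩ := hx y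
    exact Submodule.mem_sup.mpr
      ⟨a • x, Submodule.smul_mem _ a (Submodule.mem_span_singleton_self x), _, ha, by abel⟩
  by_cases htop : ∀ y : M, y ∈ maximalIdeal R • (⊤ : Submodule R M)
  · exact ⟨0, fun y ↦ ⟨0, by simpa using htop y⟩⟩
  push Not at htop
  obtain ⟨x, hx⟩ := htop
  let V := M ⧸ maximalIdeal R • (⊤ : Submodule R M)
  let : Field (R ⧸ maximalIdeal R) := Ideal.Quotient.field _
  let π : M →ₗ[R] V := Submodule.mkQ _
  have hx' : π x ≠ 0 := fun h ↦ hx ((Submodule.Quotient.mk_eq_zero _).mp h)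
  obtain ⟨φ, hφ⟩ : ∃ φ : Module.Dual (R ⧸ maximalIdeal R) V, φ (π x) ≠ 0 := by
    by_contra! h
    exact hx' ((Module.forall_dual_apply_eq_zero_iff _ _).mp h)
  -- The bilinear map `(x, y) ↦ φ(x) y` with values in `M / 𝔪M`.
  let B : M →ₗ[R] M →ₗ[R] V := LinearMap.mk₂ R (fun u v ↦ φ (π u) • π v)
    (fun u u' v ↦ by simp only [map_add, add_smul])
    (fun c u v ↦ by
      rw [map_smul, LinearMap.map_smul_of_tower, smul_assoc])
    (fun u v v' ↦ by simp only [map_add, smul_add])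
    (fun c u v ↦ by rw [map_smul, smul_comm])
  refine ⟨x, fun y ↦ ?_⟩
  have h₁ : φ (π x) • π y = φ (π y) • π x := by
    simpa [B] using congrArg (TensorProduct.lift B) (hcomm x y)
  obtain ⟨a, ha⟩ := Ideal.Quotient.mk_surjective ((φ (π x))⁻¹ * φ (π y))
  refine ⟨a, ?_⟩
  rw [← Submodule.Quotient.mk_eq_zero, Submodule.Quotient.mk_sub, Submodule.Quotient.mk_smul]
  change π y - a • π x = 0
  have h₂ : a • π x = Ideal.Quotient.mk (maximalIdeal R) a • π x := rfl
  rw [h₂, ha, mul_smul, ← h₁, smul_smul, inv_mul_cancel₀ hφ, one_smul, sub_self]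

theorem stmt_13 (R : Type u) [CommRing R] [IsNoetherianRing R] [IsLocalRing R]
    (hchar : ringChar (IsLocalRing.ResidueField R) ≠ 2)
    (M : Type u) [AddCommGroup M] [Module R M] [Module.Finite R M]
    (hrank : HasRankOne R M)
    (hemb : HasNoEmbeddedPrimes R (M ⊗[R] M)) :
    ∃ x : M, Submodule.span R {x} = ⊤ :=
  exists_span_singleton_eq_top_of_tmul_comm (tmul_comm_of_hasNoEmbeddedPrimes hrank hemb)
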